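/- Let K be a field, s ∈ ℤ^n, and let P ∈ K[x]^{m×n} be in s-unordered weak Popov form with s-pivot profile (j_i, δ_i) for 1 ≤ i ≤ m. Let σ be the permutation of {1,…,m} such that (j_{σ(i)})_{1≤i≤m} is strictly increasing. Then the s-Popov form of P (the unique basis of the row space of P in s-Popov form) has s-pivot profile (j_{σ(i)}, δ_{σ(i)}) for 1 ≤ i ≤ m. -/

import Mathlib

open Polynomial Matrix

/-- The degree of a polynomial, viewed in `ℤ ∪ {-∞}`. -/
noncomputable def degZ {K : Type*} [Field K] (p : K[X]) : WithBot ℤ :=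
  p.degree.map fun a : ℕ => (a : ℤ)

/-- The `s`-row degree of a (row) vector of polynomials. -/
noncomputable def rdegRow {K : Type*} [Field K] {ν : Type*} [Fintype ν]
    (s : ν → ℤ) (v : ν → K[X]) : WithBot ℤ :=
  Finset.univ.sup fun j => degZ (v j) + (s j : WithBot ℤ)

/-- The `s`-row degree of a polynomial matrix. -/
noncomputable def rdeg {K : Type*} [Field K] {ι ν : Type*} [Fintype ν]
    (s : ν → ℤ) (P : Matrix ι ν K[X]) : ι → WithBot ℤ :=
  fun i => rdegRow s (P i)

/-- The `t`-column degree of a polynomial matrix. -/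
noncomputable def cdeg {K : Type*} [Field K] {ι ν : Type*} [Fintype ι]
    (t : ι → ℤ) (P : Matrix ι ν K[X]) : ν → WithBot ℤ :=
  fun j => Finset.univ.sup fun i => degZ (P i j) + (t i : WithBot ℤ)

/-- Coefficient of integer degree `d` of a polynomial (0 if `d < 0`). -/
noncomputable def coeffZ {K : Type*} [Field K] (p : K[X]) (d : ℤ) : K :=
  if 0 ≤ d then p.coeff d.toNat else 0

/-- The `s`-leading matrix of a polynomial matrix. -/
noncomputable def lm {K : Type*} [Field K] {ι ν : Type*} [Fintype ν]
    (s : ν → ℤ) (P : Matrix ι ν K[X]) : Matrix ι ν K :=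
  Matrix.of fun i j =>
    (rdeg s P i).recBotCoe 0 fun t => coeffZ (P i j) (t - s j)

/-- `P` is in `s`-reduced form: its `s`-leading matrix has full row rank,
i.e. its rows are linearly independent over `K`. -/
def IsReducedForm {K : Type*} [Field K] {ι ν : Type*} [Fintype ν]
    (s : ν → ℤ) (P : Matrix ι ν K[X]) : Prop :=
  LinearIndependent K fun i => lm s P i

open Classical in
/-- The `s`-pivot index of a row vector: the largest column index where the
`s`-row degree is attained (with a nonzero entry); `⊥` for the zero row. -/
noncomputable def piv {K : Type*} [Field K] {ν : Type*} [Fintype ν] [LinearOrder ν]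
    (s : ν → ℤ) (v : ν → K[X]) : WithBot ν :=
  (Finset.univ.filter fun j => v j ≠ 0 ∧ degZ (v j) + (s j : WithBot ℤ) = rdegRow s v).max

/-- The `s`-pivot degree of a row vector (junk value `0` for the zero row). -/
noncomputable def pivDeg {K : Type*} [Field K] {ν : Type*} [Fintype ν] [LinearOrder ν]
    (s : ν → ℤ) (v : ν → K[X]) : ℕ :=
  ((piv s v).map fun j => (v j).natDegree).unbotD 0

/-- `P` is in `s`-weak Popov form: no zero row and strictly increasing `s`-pivot indices. -/
def IsWeakPopov {K : Type*} [Field K] {ι ν : Type*} [Fintype ν] [LinearOrder ν] [Preorder ι]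
    (s : ν → ℤ) (P : Matrix ι ν K[X]) : Prop :=
  (∀ i, piv s (P i) ≠ ⊥) ∧ StrictMono fun i => piv s (P i)

/-- `P` is in `s`-unordered weak Popov form: no zero row and pairwise distinct
`s`-pivot indices. -/
def IsUWeakPopov {K : Type*} [Field K] {ι ν : Type*} [Fintype ν] [LinearOrder ν]
    (s : ν → ℤ) (P : Matrix ι ν K[X]) : Prop :=
  (∀ i, piv s (P i) ≠ ⊥) ∧ Function.Injective fun i => piv s (P i)

/-- `P` is in `s`-Popov form: `s`-weak Popov, monic pivots, and each pivot entry
has degree strictly larger than the other entries of its column. -/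
def IsPopov {K : Type*} [Field K] {ι ν : Type*} [Fintype ν] [LinearOrder ν] [Preorder ι]
    (s : ν → ℤ) (P : Matrix ι ν K[X]) : Prop :=
  IsWeakPopov s P ∧
    ∀ i (j : ν), piv s (P i) = (j : WithBot ν) →
      (P i j).Monic ∧ ∀ i', i' ≠ i → (P i' j).degree < (P i j).degree

/-- The row space of a polynomial matrix. -/
noncomputable def rowSpace {K : Type*} [Field K] {ι ν : Type*} (P : Matrix ι ν K[X]) :
    Submodule K[X] (ν → K[X]) :=
  Submodule.span K[X] (Set.range fun i => P i)

/-- The rows of `B` form a basis of the module `M`. -/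
def IsBasisOf {K : Type*} [Field K] {ι ν : Type*} (B : Matrix ι ν K[X])
    (M : Submodule K[X] (ν → K[X])) : Prop :=
  LinearIndependent K[X] (fun i => B i) ∧
    Submodule.span K[X] (Set.range fun i => B i) = M

/-- The left kernel of a polynomial matrix. -/
noncomputable def leftKernel {K : Type*} [Field K] {ι ν : Type*} [Fintype ι]
    (F : Matrix ι ν K[X]) : Submodule K[X] (ι → K[X]) :=
  LinearMap.ker F.vecMulLinear

/-! Order the monomials `x ^ d` in column `j` by shifted degree `d + s j`, then by `j`: the pivot
profile of a nonzero vector is the position of its leading monomial. Multiplying a vector by a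
nonzero polynomial raises its pivot degree and keeps its pivot index. So, in a combination of rows
with distinct pivot indices, leading monomials cannot cancel. Hence each nonzero vector of the row
space of a matrix in unordered weak Popov form shares its pivot index with a row of no larger pivot
degree. The pivot indices of the matrix are therefore those of the nonzero vectors of its row space,
each with the least possible pivot degree, and both depend on the row space only. -/

section PivotProfile

variable {R ν : Type*} [Semiring R] [LinearOrder ν] {s : ν → ℤ}

/-- The position of the monomial `x ^ d` in column `j`, in the order that compares `s`-shifted
degrees and breaks ties by column index. -/
def shiftedPosition (s : ν → ℤ) (j : ν) (d : ℕ) : ℤ ×ₗ ν :=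
  toLex (d + s j, j)

theorem shiftedPosition_le_iff {j k : ν} {d e : ℕ} :
    shiftedPosition s k e ≤ shiftedPosition s j d ↔
      (e : ℤ) + s k < d + s j ∨ (e : ℤ) + s k = d + s j ∧ k ≤ j :=
  Prod.Lex.toLex_le_toLex

theorem shiftedPosition_add_le {j k : ν} {a b d e : ℕ} (hab : a ≤ b)
    (h : shiftedPosition s k e ≤ shiftedPosition s j d) :
    shiftedPosition s k (a + e) ≤ shiftedPosition s j (b + d) := by
  rw [shiftedPosition_le_iff] at h ⊢
  grind

/-- `(j, d)` is the `s`-pivot profile of `v`. Stated through coefficients rather than degrees, so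
that sums can be treated one coefficient at a time. -/
structure IsPivotProfile (s : ν → ℤ) (v : ν → R[X]) (j : ν) (d : ℕ) : Prop where
  coeff_ne_zero : (v j).coeff d ≠ 0
  position_le : ∀ k e, (v k).coeff e ≠ 0 → shiftedPosition s k e ≤ shiftedPosition s j d

theorem exists_isPivotProfile [Finite ν] (s : ν → ℤ) {v : ν → R[X]} (hv : v ≠ 0) :
    ∃ j d, IsPivotProfile s v j d := by
  obtain ⟨j, hj, hmax⟩ := Set.exists_max_image {k | v k ≠ 0}
    (fun k => shiftedPosition s k (v k).natDegree) (Set.toFinite _) (Function.ne_iff.1 hv)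
  refine ⟨j, (v j).natDegree, leadingCoeff_ne_zero.2 hj, fun k e hke => ?_⟩
  have hk : v k ≠ 0 := fun h => hke (by simp [h])
  refine le_trans ?_ (hmax k hk)
  simpa using shiftedPosition_add_le (le_natDegree_of_ne_zero hke)
    (le_refl (shiftedPosition s k 0))

theorem exists_isPivotProfile_sum {ι : Type*} {t : Finset ι} (ht : t.Nonempty)
    {w : ι → ν → R[X]} {j : ι → ν} {d : ι → ℕ}
    (hw : ∀ i ∈ t, IsPivotProfile s (w i) (j i) (d i))
    (hinj : Set.InjOn (fun i => shiftedPosition s (j i) (d i)) t) :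
    ∃ i ∈ t, IsPivotProfile s (∑ l ∈ t, w l) (j i) (d i) := by
  obtain ⟨i, hi, hmax⟩ := t.exists_max_image (fun i => shiftedPosition s (j i) (d i)) ht
  refine ⟨i, hi, ?_, fun k e hke => ?_⟩
  · have hzero : ∀ l ∈ t, l ≠ i → (w l (j i)).coeff (d i) = 0 := by
      intro l hl hli
      by_contra h
      exact hli (hinj hl hi ((hmax l hl).antisymm ((hw l hl).position_le _ _ h)))
    rw [Finset.sum_apply, finsetSum_coeff, Finset.sum_eq_single_of_mem i hi hzero]
    exact (hw i hi).coeff_ne_zero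
  · rw [Finset.sum_apply, finsetSum_coeff] at hke
    obtain ⟨l, hl, hlke⟩ := Finset.exists_ne_zero_of_sum_ne_zero hke
    exact ((hw l hl).position_le k e hlke).trans (hmax l hl)

namespace IsPivotProfile

variable {v : ν → R[X]} {j : ν} {d : ℕ}

theorem apply_ne_zero (h : IsPivotProfile s v j d) : v j ≠ 0 := fun hj =>
  h.coeff_ne_zero (by simp [hj])

theorem shiftedPosition_natDegree_le (h : IsPivotProfile s v j d) {k : ν} (hk : v k ≠ 0) :
    shiftedPosition s k (v k).natDegree ≤ shiftedPosition s j d :=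
  h.position_le _ _ (leadingCoeff_ne_zero.2 hk)

theorem natDegree_eq (h : IsPivotProfile s v j d) : (v j).natDegree = d := by
  have hge := le_natDegree_of_ne_zero h.coeff_ne_zero
  have hle := shiftedPosition_le_iff.1 (h.shiftedPosition_natDegree_le h.apply_ne_zero)
  omega

theorem smul [NoZeroDivisors R] (h : IsPivotProfile s v j d) {c : R[X]} (hc : c ≠ 0) :
    IsPivotProfile s (c • v) j (c.natDegree + d) where
  coeff_ne_zero := by
    rw [Pi.smul_apply, smul_eq_mul, ← h.natDegree_eq, coeff_mul_degree_add_degree]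
    exact mul_ne_zero (leadingCoeff_ne_zero.2 hc) (leadingCoeff_ne_zero.2 h.apply_ne_zero)
  position_le k e hke := by
    rw [Pi.smul_apply, smul_eq_mul, coeff_mul] at hke
    obtain ⟨⟨a, b⟩, hab, hne⟩ := Finset.exists_ne_zero_of_sum_ne_zero hke
    rw [← Finset.HasAntidiagonal.mem_antidiagonal.1 hab]
    exact shiftedPosition_add_le (le_natDegree_of_ne_zero (left_ne_zero_of_mul hne))
      (h.position_le k b (right_ne_zero_of_mul hne))

end IsPivotProfile

end PivotProfile

section Piv

variable {K ν : Type*} [Field K] {s : ν → ℤ}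

theorem degZ_zero : degZ (0 : K[X]) = ⊥ := by
  simp [degZ]

theorem degZ_eq_natDegree {p : K[X]} (hp : p ≠ 0) : degZ p = ((p.natDegree : ℤ) : WithBot ℤ) := by
  rw [degZ, degree_eq_natDegree hp]
  rfl

variable [Fintype ν] [LinearOrder ν] {v : ν → K[X]} {j : ν} {d : ℕ}

theorem piv_zero (s : ν → ℤ) : piv s (0 : ν → K[X]) = ⊥ := by
  simp [piv]

theorem ne_zero_of_piv_ne_bot (h : piv s v ≠ ⊥) : v ≠ 0 := by
  rintro rfl
  exact h (piv_zero s)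

namespace IsPivotProfile

theorem rdegRow_eq (h : IsPivotProfile s v j d) : rdegRow s v = ((d + s j : ℤ) : WithBot ℤ) := by
  refine le_antisymm (Finset.sup_le fun k _ => ?_) ?_
  · by_cases hk : v k = 0
    · simp [hk, degZ_zero]
    · have hkj := shiftedPosition_le_iff.1 (h.shiftedPosition_natDegree_le hk)
      rw [degZ_eq_natDegree hk, ← WithBot.coe_add, WithBot.coe_le_coe]
      omega
  · rw [← h.natDegree_eq, WithBot.coe_add, ← degZ_eq_natDegree h.apply_ne_zero]
    exact Finset.le_sup (f := fun k => degZ (v k) + (s k : WithBot ℤ)) (Finset.mem_univ j)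

theorem piv_eq (h : IsPivotProfile s v j d) : piv s v = j := by
  classical
  have attains_iff {k : ν} (hk : v k ≠ 0) :
      degZ (v k) + (s k : WithBot ℤ) = rdegRow s v ↔ ((v k).natDegree : ℤ) + s k = d + s j := by
    rw [h.rdegRow_eq, degZ_eq_natDegree hk, ← WithBot.coe_add, WithBot.coe_inj]
  refine le_antisymm (Finset.max_le fun k hk => ?_) (Finset.le_max ?_)
  · obtain ⟨hk0, hk⟩ := (Finset.mem_filter.1 hk).2
    have hkj := shiftedPosition_le_iff.1 (h.shiftedPosition_natDegree_le hk0)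
    exact WithBot.coe_le_coe.2 (hkj.resolve_left ((attains_iff hk0).1 hk).not_lt).2
  · refine Finset.mem_filter.2 ⟨Finset.mem_univ j, h.apply_ne_zero, ?_⟩
    rw [attains_iff h.apply_ne_zero, h.natDegree_eq]

theorem pivDeg_eq (h : IsPivotProfile s v j d) : pivDeg s v = d := by
  simp [pivDeg, h.piv_eq, h.natDegree_eq]

end IsPivotProfile

theorem isPivotProfile_pivDeg (h : piv s v = j) : IsPivotProfile s v j (pivDeg s v) := by
  obtain ⟨k, e, hke⟩ := exists_isPivotProfile s (ne_zero_of_piv_ne_bot (h ▸ WithBot.coe_ne_bot))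
  obtain rfl : k = j := WithBot.coe_injective (hke.piv_eq.symm.trans h)
  rwa [hke.pivDeg_eq]

end Piv

section RowSpace

variable {K ι ν : Type*} [Field K]

theorem row_mem_rowSpace (P : Matrix ι ν K[X]) (i : ι) : P i ∈ rowSpace P :=
  Submodule.subset_span ⟨i, rfl⟩

variable [Fintype ν] [LinearOrder ν] {s : ν → ℤ} {P : Matrix ι ν K[X]}

theorem IsWeakPopov.isUWeakPopov [LinearOrder ι] (hP : IsWeakPopov s P) : IsUWeakPopov s P :=
  ⟨hP.1, hP.2.injective⟩

namespace IsUWeakPopov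

theorem row_ne_zero (hP : IsUWeakPopov s P) (i : ι) : P i ≠ 0 :=
  ne_zero_of_piv_ne_bot (hP.1 i)

theorem exists_piv_eq_and_pivDeg_le (hP : IsUWeakPopov s P) {v : ν → K[X]}
    (hv : v ∈ rowSpace P) (hv0 : v ≠ 0) :
    ∃ i, piv s (P i) = piv s v ∧ pivDeg s (P i) ≤ pivDeg s v := by
  obtain ⟨c, rfl⟩ := Finsupp.mem_span_range_iff_exists_finsupp.1 hv
  have hc : c.support.Nonempty := Finsupp.support_nonempty_iff.2 fun h => hv0 (by simp [h])
  choose j hj using fun i => WithBot.ne_bot_iff_exists.1 (hP.1 i)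
  have hrow i : IsPivotProfile s (P i) (j i) (pivDeg s (P i)) := isPivotProfile_pivDeg (hj i).symm
  have j_injective : Function.Injective j := fun a b hab =>
    hP.2 (by simp only [← hj, hab])
  obtain ⟨i, -, hi⟩ := exists_isPivotProfile_sum hc
    (fun i hi => (hrow i).smul (Finsupp.mem_support_iff.1 hi))
    (fun a _ b _ hab => j_injective (congrArg (fun q => (ofLex q).2) hab))
  refine ⟨i, (hj i).symm.trans hi.piv_eq.symm, ?_⟩
  exact (Nat.le_add_left _ _).trans hi.pivDeg_eq.ge

theorem range_piv (hP : IsUWeakPopov s P) :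
    Set.range (fun i => piv s (P i)) = piv s '' {v | v ∈ rowSpace P ∧ v ≠ 0} := by
  ext j
  constructor
  · rintro ⟨i, rfl⟩
    exact ⟨P i, ⟨row_mem_rowSpace P i, hP.row_ne_zero i⟩, rfl⟩
  · rintro ⟨v, ⟨hv, hv0⟩, rfl⟩
    obtain ⟨i, hi, -⟩ := hP.exists_piv_eq_and_pivDeg_le hv hv0
    exact ⟨i, hi⟩

theorem pivDeg_le_of_mem_rowSpace (hP : IsUWeakPopov s P) {v : ν → K[X]} {i : ι}
    (hv : v ∈ rowSpace P) (hi : piv s v = piv s (P i)) : pivDeg s (P i) ≤ pivDeg s v := by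
  obtain ⟨k, hk, hle⟩ := hP.exists_piv_eq_and_pivDeg_le hv (ne_zero_of_piv_ne_bot (hi ▸ hP.1 i))
  obtain rfl : k = i := hP.2 (hk.trans hi)
  exact hle

end IsUWeakPopov

end RowSpace

theorem popov_pivot_profile_general {K ι κ ν : Type*} [Field K] [LinearOrder ι] [Fintype ν]
    [LinearOrder ν] (s : ν → ℤ) (P : Matrix κ ν K[X]) (hP : IsUWeakPopov s P)
    (σ : ι ≃ κ) (hσ : StrictMono fun i => piv s (P (σ i)))
    (Q : Matrix ι ν K[X]) (hrow : rowSpace Q = rowSpace P) (hQ : IsWeakPopov s Q) (i : ι) :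
    piv s (Q i) = piv s (P (σ i)) ∧ pivDeg s (Q i) = pivDeg s (P (σ i)) := by
  have hQu := hQ.isUWeakPopov
  have hrange : Set.range (fun i => piv s (Q i)) = Set.range fun i => piv s (P (σ i)) := by
    rw [hQu.range_piv, hrow, ← hP.range_piv]
    exact (σ.surjective.range_comp fun k => piv s (P k)).symm
  have : WellFoundedLT ι := hσ.wellFoundedLT
  have hpiv : piv s (Q i) = piv s (P (σ i)) := congrFun ((hQ.2.range_inj hσ).1 hrange) i
  have hQP : Q i ∈ rowSpace P := hrow ▸ row_mem_rowSpace Q i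
  have hPQ : P (σ i) ∈ rowSpace Q := hrow ▸ row_mem_rowSpace P (σ i)
  exact ⟨hpiv, (hQu.pivDeg_le_of_mem_rowSpace hPQ hpiv.symm).antisymm
    (hP.pivDeg_le_of_mem_rowSpace hQP hpiv)⟩

/-- Lemma 2.4: the `s`-Popov form of a matrix in
`s`-unordered weak Popov form has the same `s`-pivot profile, up to the row
permutation sorting the pivot indices increasingly. -/
theorem popov_pivot_profile {K : Type*} [Field K] {m n : ℕ}
    (s : Fin n → ℤ) (P : Matrix (Fin m) (Fin n) K[X])
    (hP : IsUWeakPopov s P)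
    (σ : Equiv.Perm (Fin m))
    (hσ : StrictMono fun i => piv s (P (σ i)))
    (Q : Matrix (Fin m) (Fin n) K[X])
    (hQbasis : IsBasisOf Q (rowSpace P)) (hQpopov : IsPopov s Q) :
    ∀ i, piv s (Q i) = piv s (P (σ i)) ∧ pivDeg s (Q i) = pivDeg s (P (σ i)) :=
  popov_pivot_profile_general s P hP σ hσ Q hQbasis.2 hQpopov.1
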